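/- arXiv:2510.03201 — 2 statements merged into one kernel-verified Lean document; each statement's English description precedes it below -/
import Mathlib

section
/- Let v be a nonincreasing classical solution of the cascade of moving-boundary PDEs. Then for every nonempty I ⊆ [N] and every (t,x) ∈ [0,T]×ℝ^I, the set I ∖ ℐ^I v(t,x) equals the union over all subsets J ⊆ I such that (t, x^J) ∈ 𝒟^J_T v. -/
open Set Filter
open scoped Topology

variable (N : ℕ) (T σ : ℝ) (D : Fin N → Fin N → ℝ)

/-- The boundary level `Σ_j D_{ij} v^{I∖i,j}_t(x^{−i})` felt by particle `i` in configuration `I`.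
Functions `v^{I,i} : [0,T]×ℝ^I → ℝ` are represented as functions on `ℝ × (Fin N → ℝ)` that only
depend on the coordinates in `I`. -/
def bdrySum (v : Finset (Fin N) → Fin N → ℝ → (Fin N → ℝ) → ℝ) (I : Finset (Fin N))
    (i : Fin N) (t : ℝ) (x : Fin N → ℝ) : ℝ :=
  ∑ j, D i j * v (I.erase i) j t x

/-- The domain `𝒟^I_T v` where all particles of the configuration `I` are alive. -/
def domT (v : Finset (Fin N) → Fin N → ℝ → (Fin N → ℝ) → ℝ) (I : Finset (Fin N)) :
    Set (ℝ × (Fin N → ℝ)) :=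
  {p | p.1 ∈ Set.Icc 0 T ∧ ∀ i ∈ I, bdrySum N D v I i p.1 p.2 < p.2 i}

/-- The domain `𝒟^I v = 𝒟^I_T v ∖ ({T}×ℝ^I)`. -/
def dom (v : Finset (Fin N) → Fin N → ℝ → (Fin N → ℝ) → ℝ) (I : Finset (Fin N)) :
    Set (ℝ × (Fin N → ℝ)) :=
  domT N T D v I ∩ {p | p.1 < T}

/-- The index set `ℐ^I v(t,x)` of killed particles. -/
noncomputable def killedSet (v : Finset (Fin N) → Fin N → ℝ → (Fin N → ℝ) → ℝ)
    (I : Finset (Fin N)) (t : ℝ) (x : Fin N → ℝ) : Finset (Fin N) :=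
  I.filter fun i => x i ≤ bdrySum N D v I i t x

/-- The boundary function `ℱ^I_i v(t,x) = v^{I∖i₀,i}_t(x^{−i₀})`, where `i₀` is the minimal
index of `ℐ^I v(t,x)` (junk value `v^{I,i}_t(x)` if no particle is killed). -/
noncomputable def bdryFun (v : Finset (Fin N) → Fin N → ℝ → (Fin N → ℝ) → ℝ)
    (I : Finset (Fin N)) (i : Fin N) (t : ℝ) (x : Fin N → ℝ) : ℝ :=
  if h : (killedSet N D v I t x).Nonempty
  then v (I.erase ((killedSet N D v I t x).min' h)) i t x
  else v I i t x

/-- `f` is `C^{1,2}` on `U` (with spatial variables ranging over the coordinates of `I`)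
and solves the backward heat equation `∂_t f + (σ²/2) Δ f = 0` there. -/
def SolvesHeatOn (I : Finset (Fin N)) (f : ℝ → (Fin N → ℝ) → ℝ)
    (U : Set (ℝ × (Fin N → ℝ))) : Prop :=
  ∃ (ft : ℝ → (Fin N → ℝ) → ℝ) (fx fxx : ℝ → (Fin N → ℝ) → Fin N → ℝ),
    (∀ p ∈ U, HasDerivWithinAt (fun s => f s p.2) (ft p.1 p.2) (Set.Icc 0 T) p.1) ∧
    (∀ p ∈ U, ∀ j ∈ I,
      HasDerivAt (fun y => f p.1 (Function.update p.2 j y)) (fx p.1 p.2 j) (p.2 j)) ∧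
    (∀ p ∈ U, ∀ j ∈ I,
      HasDerivAt (fun y => fx p.1 (Function.update p.2 j y) j) (fxx p.1 p.2 j) (p.2 j)) ∧
    ContinuousOn (fun p : ℝ × (Fin N → ℝ) => ft p.1 p.2) U ∧
    (∀ j ∈ I, ContinuousOn (fun p : ℝ × (Fin N → ℝ) => fx p.1 p.2 j) U) ∧
    (∀ j ∈ I, ContinuousOn (fun p : ℝ × (Fin N → ℝ) => fxx p.1 p.2 j) U) ∧
    (∀ p ∈ U, ft p.1 p.2 + σ ^ 2 / 2 * ∑ j ∈ I, fxx p.1 p.2 j = 0)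

/-- `v` is a classical solution of the cascade of moving boundary PDEs. -/
def IsClassicalSolution (v : Finset (Fin N) → Fin N → ℝ → (Fin N → ℝ) → ℝ) : Prop :=
  ∀ I : Finset (Fin N),
    (∀ i : Fin N, ∀ t ∈ Set.Icc (0 : ℝ) T, ∀ x y : Fin N → ℝ,
      (∀ j ∈ I, x j = y j) → v I i t x = v I i t y) ∧
    (∀ i ∉ I, ∀ t ∈ Set.Icc (0 : ℝ) T, ∀ x : Fin N → ℝ, v I i t x = 1) ∧
    ∀ i ∈ I,
      (∃ U : Set (ℝ × (Fin N → ℝ)), IsOpen U ∧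
        dom N T D v I = U ∩ {p : ℝ × (Fin N → ℝ) | p.1 ∈ Set.Ico 0 T}) ∧
      SolvesHeatOn N T σ I (v I i) (dom N T D v I) ∧
      (∃ C : ℝ, ∀ t ∈ Set.Ico (0 : ℝ) T, ∀ x : Fin N → ℝ, |v I i t x| ≤ C) ∧
      ContinuousOn (fun p : ℝ × (Fin N → ℝ) => v I i p.1 p.2)
        {p : ℝ × (Fin N → ℝ) | p.1 ∈ Set.Ico 0 T} ∧
      (∀ t ∈ Set.Icc (0 : ℝ) T, ∀ x : Fin N → ℝ, (t, x) ∉ domT N T D v I →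
        v I i t x = bdryFun N D v I i t x) ∧
      (∀ x : Fin N → ℝ, (T, x) ∈ domT N T D v I → v I i T x = 0) ∧
      (∀ K : Set (Fin N → ℝ), IsCompact K → ({T} ×ˢ K ⊆ domT N T D v I) →
        Tendsto (fun t => sSup ((fun x => |v I i t x - v I i T x|) '' K)) (𝓝[<] T) (𝓝 0))

/-- A classical solution is nonincreasing if it is jointly nonincreasing in time and
(componentwise, over the coordinates of `I`) in space. -/
def IsNonincreasingSol (v : Finset (Fin N) → Fin N → ℝ → (Fin N → ℝ) → ℝ) : Prop :=
  ∀ I : Finset (Fin N), ∀ i ∈ I, ∀ s t : ℝ, ∀ x y : Fin N → ℝ,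
    s ∈ Set.Icc (0 : ℝ) T → t ∈ Set.Icc (0 : ℝ) T → s ≤ t → (∀ j ∈ I, y j ≤ x j) →
    v I i t x ≤ v I i s y

/-!
When a killed particle is removed, the remaining values do not depend on which one was chosen:
two killed particles can be removed in either order, because removing one of them raises the values
and hence keeps the other one killed. That removal raises the values follows in turn by pushing
the coordinate `x k` down until `k` is killed, which can only raise `v I j`, and then removing `k`.
Consequently removing a killed particle leaves the boundary level of every other particle
unchanged, so the survivors `I \ killedSet I` form an alive configuration. It is the largest one,
since a particle killed in `I` is killed in every `J ⊆ I` that contains it.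
-/

section AntitoneCascade

variable {N : ℕ} {T σ : ℝ} {D : Fin N → Fin N → ℝ}
  {v : Finset (Fin N) → Fin N → ℝ → (Fin N → ℝ) → ℝ} {I J : Finset (Fin N)}
  {i j k : Fin N} {t : ℝ} {x y : Fin N → ℝ}

theorem mem_killedSet : k ∈ killedSet N D v I t x ↔ k ∈ I ∧ x k ≤ bdrySum N D v I k t x :=
  Finset.mem_filter

theorem mem_domT_iff_killedSet_eq_empty (ht : t ∈ Set.Icc 0 T) :
    (t, x) ∈ domT N T D v I ↔ killedSet N D v I t x = ∅ := by
  simp only [domT, killedSet, Set.mem_ofPred_eq, ht, true_and, Finset.filter_eq_empty_iff, not_le]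

theorem mem_killedSet_of_values_le (hD : ∀ i j, 0 ≤ D i j) (hk : k ∈ killedSet N D v I t x)
    (hkJ : k ∈ J) (hle : ∀ j, v (I.erase k) j t x ≤ v (J.erase k) j t x) :
    k ∈ killedSet N D v J t x :=
  mem_killedSet.2 ⟨hkJ, (mem_killedSet.1 hk).2.trans <|
    Finset.sum_le_sum fun j _ => mul_le_mul_of_nonneg_left (hle j) (hD k j)⟩

/-- The algebraic part of the cascade at a fixed time `t`: the boundary condition and antitonicity
in space, without the PDE. Any rule selecting the killed particle to be removed is allowed in place
of the minimal index of the paper, and the rule may even depend on the component `i`. -/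
structure IsAntitoneCascadeAt (D : Fin N → Fin N → ℝ)
    (v : Finset (Fin N) → Fin N → ℝ → (Fin N → ℝ) → ℝ) (t : ℝ) : Prop where
  eq_one_of_notMem : ∀ I, ∀ i ∉ I, ∀ x, v I i t x = 1
  exists_eq_erase : ∀ I x, (killedSet N D v I t x).Nonempty → ∀ i ∈ I,
    ∃ k ∈ killedSet N D v I t x, v I i t x = v (I.erase k) i t x
  le_of_coord_le : ∀ I, ∀ i ∈ I, ∀ x y, (∀ j ∈ I, y j ≤ x j) → v I i t x ≤ v I i t y

theorem IsClassicalSolution.isAntitoneCascadeAt (hv : IsClassicalSolution N T σ D v)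
    (hmono : IsNonincreasingSol N T v) (ht : t ∈ Set.Icc 0 T) : IsAntitoneCascadeAt D v t where
  eq_one_of_notMem I i hi x := (hv I).2.1 i hi t ht x
  exists_eq_erase I x hne i hi := by
    obtain ⟨-, -, -, -, eq_bdryFun, -⟩ := (hv I).2.2 i hi
    have notMem_domT : (t, x) ∉ domT N T D v I :=
      (mem_domT_iff_killedSet_eq_empty ht).not.2 hne.ne_empty
    exact ⟨_, Finset.min'_mem _ hne, (eq_bdryFun t ht x notMem_domT).trans (dif_pos hne)⟩
  le_of_coord_le I i hi x y hyx := hmono I i hi t t x y ht ht le_rfl hyx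

namespace IsAntitoneCascadeAt

theorem value_congr (h : IsAntitoneCascadeAt D v t) (hxy : ∀ j ∈ I, x j = y j) (i : Fin N) :
    v I i t x = v I i t y := by
  by_cases hi : i ∈ I
  · exact (h.le_of_coord_le I i hi x y fun j hj => (hxy j hj).ge).antisymm
      (h.le_of_coord_le I i hi y x fun j hj => (hxy j hj).le)
  · rw [h.eq_one_of_notMem I i hi, h.eq_one_of_notMem I i hi]

theorem value_erase_of_notMem (h : IsAntitoneCascadeAt D v t) (hj : j ∉ I) (k : Fin N)
    (x : Fin N → ℝ) : v (I.erase k) j t x = v I j t x := by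
  rw [h.eq_one_of_notMem I j hj, h.eq_one_of_notMem _ j (mt Finset.mem_of_mem_erase hj)]

theorem bdrySum_congr (h : IsAntitoneCascadeAt D v t) (hxy : ∀ j ∈ I.erase i, x j = y j) :
    bdrySum N D v I i t x = bdrySum N D v I i t y :=
  Finset.sum_congr rfl fun j _ => congrArg (D i j * ·) (h.value_congr hxy j)

theorem value_le_value_erase_of_eq_on_killed (h : IsAntitoneCascadeAt D v t)
    (hkilled : ∀ y, k ∈ killedSet N D v I t y → v I j t y = v (I.erase k) j t y)
    (x : Fin N → ℝ) : v I j t x ≤ v (I.erase k) j t x := by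
  by_cases hk : k ∈ I
  swap; · rw [Finset.erase_eq_of_notMem hk]
  by_cases hj : j ∈ I
  swap; · exact (h.value_erase_of_notMem hj k x).ge
  set y := Function.update x k (min (x k) (bdrySum N D v I k t x)) with hy
  have y_eq_x : ∀ l ∈ I.erase k, y l = x l := fun l hl =>
    Function.update_of_ne (Finset.ne_of_mem_erase hl) _ _
  have y_le_x : y ≤ x := update_le_self_iff.2 (min_le_left _ _)
  have k_killed : k ∈ killedSet N D v I t y := by
    rw [mem_killedSet, h.bdrySum_congr y_eq_x, hy, Function.update_self]
    exact ⟨hk, min_le_right _ _⟩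
  calc v I j t x ≤ v I j t y := h.le_of_coord_le I j hj x y fun l _ => y_le_x l
    _ = v (I.erase k) j t y := hkilled y k_killed
    _ = v (I.erase k) j t x := h.value_congr y_eq_x j

theorem value_eq_value_erase_of_mem_killedSet (h : IsAntitoneCascadeAt D v t)
    (hD : ∀ i j, 0 ≤ D i j) (hk : k ∈ killedSet N D v I t x) (j : Fin N) :
    v I j t x = v (I.erase k) j t x := by
  induction I using Finset.strongInduction generalizing x k j with
  | H I ih =>
  by_cases hj : j ∈ I
  swap; · exact (h.value_erase_of_notMem hj k x).symm
  obtain ⟨m, hm, eq_erase_m⟩ := h.exists_eq_erase I x ⟨k, hk⟩ j hj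
  obtain rfl | hmk := eq_or_ne m k
  · exact eq_erase_m
  have erase_second : ∀ {a b}, a ∈ killedSet N D v I t x → b ∈ killedSet N D v I t x → a ≠ b →
      v (I.erase b) j t x = v ((I.erase b).erase a) j t x := by
    intro a b ha hb hab
    have haI := (mem_killedSet.1 ha).1
    refine ih _ (Finset.erase_ssubset (mem_killedSet.1 hb).1)
      (mem_killedSet_of_values_le hD ha (Finset.mem_erase.2 ⟨hab, haI⟩) fun l => ?_) j
    rw [Finset.erase_right_comm]
    exact h.value_le_value_erase_of_eq_on_killed
      (fun y hb' => ih _ (Finset.erase_ssubset haI) hb' l) x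
  calc v I j t x = v (I.erase m) j t x := eq_erase_m
    _ = v ((I.erase m).erase k) j t x := erase_second hk hm hmk.symm
    _ = v ((I.erase k).erase m) j t x := by rw [Finset.erase_right_comm]
    _ = v (I.erase k) j t x := (erase_second hm hk hmk).symm

theorem antitone_config (h : IsAntitoneCascadeAt D v t) (hD : ∀ i j, 0 ≤ D i j) (j : Fin N)
    (x : Fin N → ℝ) : Antitone fun I => v I j t x := by
  rw [Finset.antitone_iff_forall_insert_le]
  intro I k hk
  have hle := h.value_le_value_erase_of_eq_on_killed
    (fun _ hk' => h.value_eq_value_erase_of_mem_killedSet hD hk' j) (I := insert k I) (k := k) x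
  rwa [Finset.erase_insert hk] at hle

theorem mem_killedSet_of_subset (h : IsAntitoneCascadeAt D v t) (hD : ∀ i j, 0 ≤ D i j)
    (hJ : J ⊆ I) (hkJ : k ∈ J) (hk : k ∈ killedSet N D v I t x) : k ∈ killedSet N D v J t x :=
  mem_killedSet_of_values_le hD hk hkJ fun j =>
    h.antitone_config hD j x (Finset.erase_subset_erase k hJ)

theorem bdrySum_erase_of_mem_killedSet (h : IsAntitoneCascadeAt D v t) (hD : ∀ i j, 0 ≤ D i j)
    (hk : k ∈ killedSet N D v I t x) (hki : k ≠ i) :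
    bdrySum N D v (I.erase k) i t x = bdrySum N D v I i t x := by
  have hk' : k ∈ killedSet N D v (I.erase i) t x :=
    h.mem_killedSet_of_subset hD (Finset.erase_subset i I)
      (Finset.mem_erase.2 ⟨hki, (mem_killedSet.1 hk).1⟩) hk
  refine Finset.sum_congr rfl fun j _ => ?_
  rw [Finset.erase_right_comm, ← h.value_eq_value_erase_of_mem_killedSet hD hk' j]

theorem killedSet_erase (h : IsAntitoneCascadeAt D v t) (hD : ∀ i j, 0 ≤ D i j)
    (hk : k ∈ killedSet N D v I t x) :
    killedSet N D v (I.erase k) t x = (killedSet N D v I t x).erase k := by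
  unfold killedSet
  rw [← Finset.filter_erase]
  refine Finset.filter_congr fun i hi => ?_
  rw [h.bdrySum_erase_of_mem_killedSet hD hk (Finset.ne_of_mem_erase hi).symm]

theorem killedSet_sdiff (h : IsAntitoneCascadeAt D v t) (hD : ∀ i j, 0 ≤ D i j)
    (hJ : J ⊆ killedSet N D v I t x) :
    killedSet N D v (I \ J) t x = killedSet N D v I t x \ J := by
  induction J using Finset.induction with
  | empty => rw [Finset.sdiff_empty, Finset.sdiff_empty]
  | insert k J hkJ ih =>
    obtain ⟨hk, hJ⟩ := Finset.insert_subset_iff.1 hJ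
    have hk' : k ∈ killedSet N D v (I \ J) t x := ih hJ ▸ Finset.mem_sdiff.2 ⟨hk, hkJ⟩
    rw [Finset.sdiff_insert, Finset.sdiff_insert, h.killedSet_erase hD hk', ih hJ]

end IsAntitoneCascadeAt

theorem classicalSolution_alive_set_eq_union_of_alive_subconfigurations_general
    (hD : ∀ i j, 0 ≤ D i j) (h : IsAntitoneCascadeAt D v t) (ht : t ∈ Set.Icc 0 T)
    (I : Finset (Fin N)) (x : Fin N → ℝ) :
    (↑(I \ killedSet N D v I t x) : Set (Fin N)) =
      ⋃ (J : Finset (Fin N)) (_ : J ⊆ I) (_ : (t, x) ∈ domT N T D v J), (↑J : Set (Fin N)) := by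
  simp only [mem_domT_iff_killedSet_eq_empty ht]
  apply subset_antisymm
  · have survivors_alive : killedSet N D v (I \ killedSet N D v I t x) t x = ∅ := by
      rw [h.killedSet_sdiff hD Finset.Subset.rfl, Finset.sdiff_self]
    exact Set.subset_iUnion₂_of_subset _ Finset.sdiff_subset
      (Set.subset_iUnion_of_subset survivors_alive Set.Subset.rfl)
  · refine Set.iUnion₂_subset fun J hJ => Set.iUnion_subset fun J_alive i hi => ?_
    refine Finset.mem_coe.2 (Finset.mem_sdiff.2 ⟨hJ hi, fun i_killed => ?_⟩)
    have i_killed_in_J : i ∈ killedSet N D v J t x := h.mem_killedSet_of_subset hD hJ hi i_killed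
    exact Finset.notMem_empty i (J_alive ▸ i_killed_in_J)

end AntitoneCascade

/-- the set of particles of `I` that are still alive at `(t,x)` is the union of all
subconfigurations `J ⊆ I` for which `(t,x^J)` belongs to the domain `𝒟^J_T v`. -/
theorem classicalSolution_alive_set_eq_union_of_alive_subconfigurations
    (hT : 0 < T) (hσ : 0 < σ) (hD : ∀ i j, 0 ≤ D i j)
    (v : Finset (Fin N) → Fin N → ℝ → (Fin N → ℝ) → ℝ)
    (hv : IsClassicalSolution N T σ D v) (hmono : IsNonincreasingSol N T v)
    (I : Finset (Fin N)) (hI : I.Nonempty)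
    (t : ℝ) (ht : t ∈ Set.Icc (0 : ℝ) T) (x : Fin N → ℝ) :
    (↑(I \ killedSet N D v I t x) : Set (Fin N)) =
      ⋃ (J : Finset (Fin N)) (_ : J ⊆ I) (_ : (t, x) ∈ domT N T D v J),
        (↑J : Set (Fin N)) :=
  classicalSolution_alive_set_eq_union_of_alive_subconfigurations_general hD
    (hv.isAntitoneCascadeAt hmono ht) ht I x
end

section
/- Let v be a nonincreasing classical solution of the cascade of moving-boundary PDEs. Then for every I ⊆ [N], every i ∈ I, and every x ∈ ℝ^I, one has lim_{t↗T} v^{I,i}_t(x) = v^{I,i}_T(x). -/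
/-!
Only the values at a fixed point `x` matter, and the proof is by strong induction on the
configuration `I`. If `(T, x)` lies in `𝒟^I_T v`, the terminal condition gives the limit. Otherwise
some particle is killed at time `T`. By induction the boundary levels converge as `t ↗ T`, and by
monotonicity in time they do so from above. As particle `k` is killed under the non-strict condition
`x_k ≤ level`, a particle killed at `T` is already killed before `T`, and one alive at `T` is alive
shortly before `T`. So the set of killed particles is eventually constant, the same `i₀` is removed
for all `t` near `T`, and the induction hypothesis for `I ∖ i₀` applies.
-/

open Set Filter
open scoped Topology

variable (N : ℕ) (T σ : ℝ) (D : Fin N → Fin N → ℝ)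

theorem eventually_filter_le_eq_of_tendsto_of_le {ι α β : Type*} [LinearOrder β]
    [TopologicalSpace β] [ClosedIciTopology β] {l : Filter α} {s : Finset ι} {f : α → ι → β}
    {b : ι → β} (a : ι → β) (hlim : ∀ k ∈ s, Tendsto (fun t => f t k) l (𝓝 (b k)))
    (hle : ∀ᶠ t in l, ∀ k ∈ s, b k ≤ f t k) :
    ∀ᶠ t in l, s.filter (fun k => a k ≤ f t k) = s.filter fun k => a k ≤ b k := by
  have hlt : ∀ᶠ t in l, ∀ k ∈ s, b k < a k → f t k < a k := by
    rw [eventually_all_finset]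
    exact fun k hk => eventually_imp_distrib_left.2 fun h => (hlim k hk).eventually_lt_const h
  filter_upwards [hlt, hle] with t hlt hle
  exact Finset.filter_congr fun k hk =>
    ⟨fun h => not_lt.1 fun hb => (hlt k hk hb).not_ge h, fun h => h.trans (hle k hk)⟩

section Cascade

variable {N T D}
variable {v : Finset (Fin N) → Fin N → ℝ → (Fin N → ℝ) → ℝ} {I : Finset (Fin N)} {i : Fin N}
  {s t t₀ : ℝ} {x : Fin N → ℝ} {l : Filter ℝ}

theorem bdrySum_le_bdrySum (hD : ∀ j, 0 ≤ D i j)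
    (h : ∀ j, v (I.erase i) j s x ≤ v (I.erase i) j t x) :
    bdrySum N D v I i s x ≤ bdrySum N D v I i t x :=
  Finset.sum_le_sum fun j _ => mul_le_mul_of_nonneg_left (h j) (hD j)

theorem tendsto_bdrySum
    (h : ∀ j, Tendsto (fun t => v (I.erase i) j t x) l (𝓝 (v (I.erase i) j t₀ x))) :
    Tendsto (fun t => bdrySum N D v I i t x) l (𝓝 (bdrySum N D v I i t₀ x)) :=
  tendsto_finsetSum _ fun j _ => (h j).const_mul _

theorem notMem_domT_iff_killedSet_nonempty (ht : t ∈ Icc 0 T) :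
    (t, x) ∉ domT N T D v I ↔ (killedSet N D v I t x).Nonempty := by
  simp only [domT, killedSet, mem_ofPred_eq, ht, true_and, not_forall, not_lt, exists_prop,
    Finset.filter_nonempty_iff]

theorem eventually_killedSet_eq (hD : ∀ k ∈ I, ∀ j, 0 ≤ D k j)
    (hlim : ∀ k ∈ I, ∀ j,
      Tendsto (fun t => v (I.erase k) j t x) l (𝓝 (v (I.erase k) j t₀ x)))
    (hle : ∀ᶠ t in l, ∀ k ∈ I, ∀ j, v (I.erase k) j t₀ x ≤ v (I.erase k) j t x) :
    ∀ᶠ t in l, killedSet N D v I t x = killedSet N D v I t₀ x :=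
  eventually_filter_le_eq_of_tendsto_of_le x (fun k hk => tendsto_bdrySum (hlim k hk)) <|
    hle.mono fun _ h k hk => bdrySum_le_bdrySum (hD k hk) (h k hk)

theorem bdryFun_of_killedSet_eq {K : Finset (Fin N)} (hK : K.Nonempty)
    (h : killedSet N D v I t x = K) :
    bdryFun N D v I i t x = v (I.erase (K.min' hK)) i t x := by
  subst h
  exact dif_pos hK

theorem tendsto_bdryFun (hne : (killedSet N D v I t₀ x).Nonempty)
    (hkilled : ∀ᶠ t in l, killedSet N D v I t x = killedSet N D v I t₀ x)
    (hlim : ∀ k ∈ I, Tendsto (fun t => v (I.erase k) i t x) l (𝓝 (v (I.erase k) i t₀ x))) :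
    Tendsto (fun t => bdryFun N D v I i t x) l (𝓝 (bdryFun N D v I i t₀ x)) := by
  have hmem : (killedSet N D v I t₀ x).min' hne ∈ I :=
    Finset.filter_subset _ _ (Finset.min'_mem _ hne)
  rw [bdryFun_of_killedSet_eq hne rfl]
  exact (hlim _ hmem).congr' (hkilled.mono fun t ht => (bdryFun_of_killedSet_eq hne ht).symm)

theorem tendsto_of_notMem_domT (hT : 0 < T) (hD : ∀ k ∈ I, ∀ j, 0 ≤ D k j)
    (hle : ∀ k ∈ I, ∀ j, ∀ t ∈ Icc 0 T, v (I.erase k) j T x ≤ v (I.erase k) j t x)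
    (hbdry : ∀ t ∈ Icc 0 T, (t, x) ∉ domT N T D v I → v I i t x = bdryFun N D v I i t x)
    (hlim : ∀ k ∈ I, ∀ j,
      Tendsto (fun t => v (I.erase k) j t x) (𝓝[<] T) (𝓝 (v (I.erase k) j T x)))
    (hx : (T, x) ∉ domT N T D v I) :
    Tendsto (fun t => v I i t x) (𝓝[<] T) (𝓝 (v I i T x)) := by
  have hTmem : T ∈ Icc 0 T := right_mem_Icc.2 hT.le
  have htime : ∀ᶠ t in 𝓝[<] T, t ∈ Icc 0 T := Icc_mem_nhdsLT hT
  have hne := (notMem_domT_iff_killedSet_nonempty hTmem).1 hx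
  have hkilled : ∀ᶠ t in 𝓝[<] T, killedSet N D v I t x = killedSet N D v I T x :=
    eventually_killedSet_eq hD hlim (htime.mono fun t ht k hk j => hle k hk j t ht)
  rw [hbdry T hTmem hx]
  refine (tendsto_bdryFun hne hkilled fun k hk => hlim k hk i).congr' ?_
  filter_upwards [hkilled, htime] with t hkt ht
  exact (hbdry t ht ((notMem_domT_iff_killedSet_nonempty ht).2 (hkt ▸ hne))).symm

theorem classicalSolution_continuous_at_terminal_time_general
    (hT : 0 < T) (hD : ∀ i j, 0 ≤ D i j)
    (hdead : ∀ I, ∀ i ∉ I, ∀ t ∈ Icc 0 T, v I i t x = 1)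
    (hle : ∀ I, ∀ i ∈ I, ∀ t ∈ Icc 0 T, v I i T x ≤ v I i t x)
    (hbdry : ∀ I, ∀ i ∈ I, ∀ t ∈ Icc 0 T, (t, x) ∉ domT N T D v I →
      v I i t x = bdryFun N D v I i t x)
    (hterm : ∀ I, ∀ i ∈ I, (T, x) ∈ domT N T D v I →
      Tendsto (fun t => v I i t x) (𝓝[<] T) (𝓝 (v I i T x)))
    (I : Finset (Fin N)) (i : Fin N) :
    Tendsto (fun t => v I i t x) (𝓝[<] T) (𝓝 (v I i T x)) := by
  have hTmem : T ∈ Icc 0 T := right_mem_Icc.2 hT.le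
  have hle' : ∀ I i, ∀ t ∈ Icc 0 T, v I i T x ≤ v I i t x := fun I i t ht => by
    by_cases hi : i ∈ I
    · exact hle I i hi t ht
    · rw [hdead I i hi t ht, hdead I i hi T hTmem]
  induction I using Finset.strongInduction generalizing i with
  | H I ih =>
    by_cases hi : i ∈ I
    · by_cases hx : (T, x) ∈ domT N T D v I
      · exact hterm I i hi hx
      · exact tendsto_of_notMem_domT hT (fun k _ => hD k) (fun k _ => hle' (I.erase k))
          (hbdry I i hi) (fun k hk => ih _ (Finset.erase_ssubset hk)) hx
    · rw [hdead I i hi T hTmem]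
      refine tendsto_const_nhds.congr' ?_
      filter_upwards [Icc_mem_nhdsLT hT] with t ht using (hdead I i hi t ht).symm

variable {σ}

theorem IsClassicalSolution.tendsto_of_mem_domT (hv : IsClassicalSolution N T σ D v) (hi : i ∈ I)
    (hx : (T, x) ∈ domT N T D v I) :
    Tendsto (fun t => v I i t x) (𝓝[<] T) (𝓝 (v I i T x)) := by
  obtain ⟨-, -, -, -, -, -, hunif⟩ := (hv I).2.2 i hi
  have h := hunif {x} isCompact_singleton
    (by simpa only [singleton_prod_singleton, singleton_subset_iff] using hx)
  simp only [image_singleton, csSup_singleton] at h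
  exact tendsto_iff_dist_tendsto_zero.2 h

theorem IsClassicalSolution.eq_bdryFun_of_notMem_domT (hv : IsClassicalSolution N T σ D v)
    (hi : i ∈ I) (ht : t ∈ Icc 0 T) (hx : (t, x) ∉ domT N T D v I) :
    v I i t x = bdryFun N D v I i t x := by
  obtain ⟨-, -, -, -, hbdry, -⟩ := (hv I).2.2 i hi
  exact hbdry t ht x hx

theorem IsNonincreasingSol.antitoneOn (hmono : IsNonincreasingSol N T v) (hi : i ∈ I)
    (x : Fin N → ℝ) : AntitoneOn (fun t => v I i t x) (Icc 0 T) :=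
  fun s hs t ht hst => hmono I i hi s t x x hs ht hst fun _ _ => le_rfl

end Cascade

/-- a nonincreasing classical solution attains its terminal value continuously:
`v^{I,i}_t(x) → v^{I,i}_T(x)` as `t ↗ T`. -/
theorem classicalSolution_continuous_at_terminal_time
    (hT : 0 < T) (hσ : 0 < σ) (hD : ∀ i j, 0 ≤ D i j)
    (v : Finset (Fin N) → Fin N → ℝ → (Fin N → ℝ) → ℝ)
    (hv : IsClassicalSolution N T σ D v) (hmono : IsNonincreasingSol N T v) :
    ∀ I : Finset (Fin N), ∀ i ∈ I, ∀ x : Fin N → ℝ,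
      Tendsto (fun t => v I i t x) (𝓝[<] T) (𝓝 (v I i T x)) :=
  fun I i _ x => classicalSolution_continuous_at_terminal_time_general hT hD
    (fun I i hi t ht => (hv I).2.1 i hi t ht x)
    (fun _ _ hi _ ht => hmono.antitoneOn hi x ht (right_mem_Icc.2 hT.le) ht.2)
    (fun _ _ hi _ ht hx => hv.eq_bdryFun_of_notMem_domT hi ht hx)
    (fun _ _ hi hx => hv.tendsto_of_mem_domT hi hx) I i
end
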